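/- Let U ∈ C²([1,∞)) solve (1−ρ²)U''(ρ) + (2/ρ − 4ρ)U'(ρ) − 2U(ρ) + U(ρ)³ = 0 for all ρ > 1, with U(1) > √2. Then U'(ρ) > 0 for all ρ ≥ 1; in particular U is strictly increasing on [1,∞) and U(ρ) > √2 for all ρ ≥ 1. -/

import Mathlib

/-!
The proof is a first-zero argument for `V = U'`. By continuity the equation persists at the
singular point `ρ = 1`, where it reads `2 V(1) = U(1) (U(1)² - 2) > 0`. If `V` were nonpositive
somewhere, let `c > 1` be the least point with `V(c) ≤ 0`. On `[1, c]` the function `U` increases,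
so `U(c) > √2`, and the equation gives
`(c² - 1) V'(c) = (2/c - 4c) V(c) + U(c) (U(c)² - 2) > 0`,
whereas `V > 0 ≥ V(c)` to the left of `c` forces `V'(c) ≤ 0`.
-/

/-- For a `C²` solution on `[1,∞)` of the profile equation with `U(1) > √2`, the
derivative is positive on `[1,∞)`, `U` is strictly increasing, and `U > √2`. -/
theorem cubic_wave_monotone_outside (U : ℝ → ℝ)
    (hU : ContDiffOn ℝ 2 U (Set.Ici 1))
    (heq : ∀ ρ : ℝ, 1 < ρ →
      (1 - ρ ^ 2) * deriv (deriv U) ρ + (2 / ρ - 4 * ρ) * deriv U ρ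
        - 2 * U ρ + (U ρ) ^ 3 = 0)
    (hb : Real.sqrt 2 < U 1) :
    (∀ ρ ∈ Set.Ici (1 : ℝ), 0 < derivWithin U (Set.Ici 1) ρ) ∧
    StrictMonoOn U (Set.Ici 1) ∧
    ∀ ρ ∈ Set.Ici (1 : ℝ), Real.sqrt 2 < U ρ := by
  have hud : UniqueDiffOn ℝ (Set.Ici (1 : ℝ)) := uniqueDiffOn_Ici 1
  have hnhds : ∀ x : ℝ, 1 < x → Set.Ici (1 : ℝ) ∈ nhds x := fun x hx => Ici_mem_nhds hx
  set V : ℝ → ℝ := derivWithin U (Set.Ici 1) with hV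
  have hVC : ContDiffOn ℝ 1 V (Set.Ici 1) := hU.derivWithin hud (by norm_num)
  have hVc : ContinuousOn V (Set.Ici 1) := hVC.continuousOn
  have hUc : ContinuousOn U (Set.Ici 1) := hU.continuousOn
  have hWc : ContinuousOn (derivWithin V (Set.Ici 1)) (Set.Ici 1) :=
    hVC.continuousOn_derivWithin hud le_rfl
  have hVU : ∀ x : ℝ, 1 < x → deriv U x = V x := fun x hx =>
    (derivWithin_of_mem_nhds (hnhds x hx)).symm
  have hWV : ∀ x : ℝ, 1 < x → deriv (deriv U) x = deriv V x := fun x hx =>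
    Filter.EventuallyEq.deriv_eq (by
      filter_upwards [lt_mem_nhds hx] with y hy using hVU y hy)
  have heq' : ∀ x : ℝ, 1 < x →
      (1 - x ^ 2) * deriv V x + (2 / x - 4 * x) * V x - 2 * U x + (U x) ^ 3 = 0 := by
    intro x hx
    rw [← hWV x hx, ← hVU x hx]
    exact heq x hx
  have hmono : ∀ s : Set ℝ, Convex ℝ s → s ⊆ Set.Ici 1 →
      (∀ x ∈ interior s, 0 < V x) → StrictMonoOn U s := by
    intro s hs hsub hpos
    refine strictMonoOn_of_deriv_pos hs (hUc.mono hsub) fun x hx => ?_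
    have hx1 : 1 < x := by
      have := interior_mono hsub hx
      rwa [interior_Ici] at this
    rw [hVU x hx1]
    exact hpos x hx
  have hcube : ∀ u : ℝ, Real.sqrt 2 < u → 0 < u ^ 3 - 2 * u := by
    intro u hu
    have h0 : 0 < u := (Real.sqrt_nonneg 2).trans_lt hu
    have h2 : 2 < u ^ 2 := (Real.sqrt_lt' h0).1 hu
    nlinarith [mul_pos h0 (sub_pos.2 h2)]
  -- The equation extends to the closure `[1, ∞)` of `(1, ∞)` by continuity.
  have hV1 : 0 < V 1 := by
    have hEq : Set.EqOn (fun x : ℝ => (1 - x ^ 2) * derivWithin V (Set.Ici 1) x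
        + (2 / x - 4 * x) * V x - 2 * U x + (U x) ^ 3) (fun _ => 0) (Set.Ici 1) := by
      refine Set.EqOn.of_subset_closure (s := Set.Ioi 1) ?_ ?_ continuousOn_const
        Set.Ioi_subset_Ici_self (by rw [closure_Ioi])
      · intro x hx
        simp only [derivWithin_of_mem_nhds (hnhds x hx)]
        exact heq' x hx
      · have hdiv : ContinuousOn (fun x : ℝ => 2 / x) (Set.Ici 1) :=
          continuousOn_const.div continuousOn_id fun x hx =>
            (lt_of_lt_of_le one_pos (Set.mem_Ici.1 hx)).ne'
        fun_prop
    have h1 := hEq (Set.mem_Ici.2 le_rfl)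
    norm_num at h1
    linarith [hcube _ hb]
  have hpos : ∀ x ∈ Set.Ici (1 : ℝ), 0 < V x := by
    by_contra! hneg
    obtain ⟨b, hb1, hVb⟩ := hneg
    have hcomp : IsCompact (Set.Icc 1 b ∩ V ⁻¹' Set.Iic 0) :=
      isCompact_Icc.of_isClosed_subset
        ((hVc.mono Set.Icc_subset_Ici_self).preimage_isClosed_of_isClosed isClosed_Icc isClosed_Iic)
        Set.inter_subset_left
    obtain ⟨c, ⟨⟨hc1, hcb⟩, hVc0⟩, hmin⟩ := hcomp.exists_isLeast ⟨b, ⟨hb1, le_rfl⟩, hVb⟩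
    have hVc0 : V c ≤ 0 := hVc0
    have hc : 1 < c := lt_of_le_of_ne hc1 (by rintro rfl; linarith)
    have hleft : ∀ x, 1 ≤ x → x < c → 0 < V x := by
      intro x hx hxc
      by_contra! h
      exact absurd (hmin ⟨⟨hx, hxc.le.trans hcb⟩, h⟩) (not_le.2 hxc)
    have hUcc : Real.sqrt 2 < U c :=
      hb.trans (hmono (Set.Icc 1 c) (convex_Icc 1 c) Set.Icc_subset_Ici_self
        (fun x hx => by
          rw [interior_Icc] at hx
          exact hleft x hx.1.le hx.2) ⟨le_rfl, hc1⟩ ⟨hc1, le_rfl⟩ hc)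
    have hder : HasDerivAt V (deriv V c) c :=
      ((hVC.differentiableOn one_ne_zero).differentiableAt (hnhds c hc)).hasDerivAt
    have hle : deriv V c ≤ 0 := by
      have ht := (hasDerivAt_iff_tendsto_slope.1 hder).mono_left
        (nhdsWithin_mono c (fun x (hx : x < c) => hx.ne) :
          nhdsWithin c (Set.Iio c) ≤ nhdsWithin c {c}ᶜ)
      refine le_of_tendsto ht ?_
      filter_upwards [Ioo_mem_nhdsLT hc] with x hx
      rw [slope_def_field]
      exact div_nonpos_of_nonneg_of_nonpos (by linarith [hleft x hx.1.le hx.2])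
        (by linarith [hx.2])
    have hcoef : 2 / c - 4 * c ≤ 0 := by
      have : 2 / c ≤ 2 := div_le_self (by norm_num) hc1
      linarith
    have hsq : 1 - c ^ 2 ≤ 0 := by nlinarith
    linarith [heq' c hc, hcube _ hUcc, mul_nonneg_of_nonpos_of_nonpos hcoef hVc0,
      mul_nonneg_of_nonpos_of_nonpos hsq hle]
  have hUmono : StrictMonoOn U (Set.Ici 1) :=
    hmono _ (convex_Ici 1) subset_rfl fun x hx => hpos x (interior_subset hx)
  exact ⟨hpos, hUmono, fun x hx =>
    hb.trans_le (hUmono.monotoneOn (Set.mem_Ici.2 le_rfl) hx hx)⟩
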